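/- Let N ≥ 1 and let 0 < α_1 < α_2 < … < α_N be real numbers, none of which is a positive integer, such that α_k − α_j is not an integer whenever j ≠ k. Let a > 0 be a real number and ℓ ∈ ℕ ∪ {0}. Suppose f_1, …, f_N : (0,∞) → ℂ are C^∞ functions and there exist constants c, δ > 0 such that for every k one has |f_k(τ)| ≤ c e^{−δτ} for all τ ∈ (a,∞) and |f_k(τ)| ≤ c e^{−δ/τ} for all τ ∈ (0,a]. If Σ_{k=1}^N Γ(m+1+α_k) ∫_0^∞ f_k(τ) τ^{−m} dτ = 0 for every integer m with m ≥ ℓ, then f_k(τ) = 0 for all τ ∈ (0,∞) and all k = 1,…,N. -/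

import Mathlib

/-!
Proposition 3.1 of the paper (key decoupling lemma for the entanglement principle),
stated for an arbitrary threshold `a > 0`.
-/

open MeasureTheory Real Set

/-!
Put `g_k(τ) = τ^{1 + α_k} f_k(τ)`, with Laplace transform `L_k`. Writing `Γ(s) τ^{-s}` as
`∫_0^∞ u^{s-1} e^{-uτ} du` turns the hypothesis into the vanishing of all moments of high order of
`H(u) = ∑ u^{α_k} L_k(u)` on `(0, ∞)`. Since `uτ + d/τ ≥ 2 √(du)`, the decay of the `f_k` at `0`
makes `H` decay like `e^{-c √u}`, which is just enough for the moments to determine it, so `H = 0`.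
The `L_k` are analytic at `0` and the `α_k` are distinct modulo `ℤ`, so the leading terms
`u^{α_k + n_k}` of the nonzero summands would be different real powers and could not cancel: every
`L_k` vanishes near `0`. By analytic continuation it vanishes on the imaginary axis, and Fourier
inversion gives `g_k = 0`.
-/

open Filter Asymptotics FourierTransform
open scoped Topology Nat

section ExponentialDecay

variable {X E : Type*} [NormedAddCommGroup E]

lemma isBigO_rpow_smul_exp_neg [NormedSpace ℝ E] {l : Filter X} {w : X → ℝ}
    (hw : ∀ᶠ x in l, 0 ≤ w x)
    {g : X → E} {c c' p : ℝ} (hp : 0 ≤ p) (hcc' : c' < c)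
    (hg : g =O[l] fun x ↦ exp (-c * w x)) :
    (fun x ↦ w x ^ p • g x) =O[l] fun x ↦ exp (-c' * w x) := by
  have hpow : (fun x ↦ w x ^ p) =O[l] fun x ↦ exp ((c - c') * w x) := by
    refine .of_bound ((p / |c - c'|) ^ p) (hw.mono fun x hx ↦ ?_)
    simpa [abs_of_nonneg hx, abs_of_nonneg (rpow_nonneg hx p),
      abs_of_pos (sub_pos.2 hcc')] using
      ProbabilityTheory.rpow_abs_le_mul_exp_abs (w x) hp (sub_pos.2 hcc').ne'
  refine (hpow.smul hg).congr_right fun x ↦ ?_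
  rw [smul_eq_mul, ← exp_add]
  ring_nf

lemma isBigO_pow_smul_exp_neg [NormedSpace ℝ E] {l : Filter X} {w : X → ℝ}
    (hw : ∀ᶠ x in l, 0 ≤ w x)
    {g : X → E} {c c' : ℝ} (hcc' : c' < c) (hg : g =O[l] fun x ↦ exp (-c * w x)) (n : ℕ) :
    (fun x ↦ w x ^ n • g x) =O[l] fun x ↦ exp (-c' * w x) := by
  simpa only [rpow_natCast] using isBigO_rpow_smul_exp_neg hw n.cast_nonneg hcc' hg

lemma integrable_exp_neg_mul_abs {c : ℝ} (hc : 0 < c) : Integrable fun x : ℝ ↦ exp (-c * |x|) := by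
  rw [← integrableOn_univ, ← Iic_union_Ioi (a := (0 : ℝ))]
  refine IntegrableOn.union ?_ ?_
  · refine (integrableOn_exp_mul_Iic hc 0).congr_fun (fun x hx ↦ ?_) measurableSet_Iic
    simp [abs_of_nonpos (mem_Iic.1 hx)]
  · refine (integrableOn_exp_mul_Ioi (neg_lt_zero.2 hc) 0).congr_fun (fun x hx ↦ ?_)
      measurableSet_Ioi
    simp [abs_of_pos (mem_Ioi.1 hx)]

end ExponentialDecay

section BilateralLaplace

variable {E : Type*} [NormedAddCommGroup E] [NormedSpace ℂ E] {f : ℝ → E} {c : ℝ}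

/-- The bilateral Laplace transform `z ↦ ∫ e^{-zx} f(x) dx` over the whole real line. On the
imaginary axis it is the Fourier transform of `f`. -/
noncomputable def bilateralLaplace (f : ℝ → E) (z : ℂ) : E :=
  ∫ x : ℝ, Complex.exp (-z * x) • f x

lemma hasSum_bilateralLaplace (hfm : AEStronglyMeasurable f)
    (hf : f =O[⊤] fun x ↦ exp (-c * |x|)) {z : ℂ} (hz : ‖z‖ < c) :
    HasSum (fun n : ℕ ↦ z ^ n • ((-1) ^ n / n ! : ℂ) • ∫ x : ℝ, x ^ n • f x)
      (bilateralLaplace f z) := by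
  obtain ⟨C, hC⟩ := isBigO_top.1 hf
  have hexp (x : ℝ) : HasSum (fun n : ℕ ↦ (‖z‖ * |x|) ^ n / n ! * (C * exp (-c * |x|)))
      (C * exp (-(c - ‖z‖) * |x|)) := by
    have h := (NormedSpace.expSeries_div_hasSum_exp (‖z‖ * |x|)).mul_right (C * exp (-c * |x|))
    rw [← Real.exp_eq_exp_ℝ, mul_left_comm, ← Real.exp_add] at h
    rwa [show -(c - ‖z‖) * |x| = ‖z‖ * |x| + -c * |x| by ring]
  convert! hasSum_integral_of_dominated_convergence
    (F := fun (n : ℕ) (x : ℝ) ↦ ((-z * x) ^ n / n !) • f x)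
    (fun n x ↦ (‖z‖ * |x|) ^ n / n ! * (C * exp (-c * |x|)))
    (fun n ↦ ?_) (fun n ↦ .of_forall fun x ↦ ?_) (.of_forall fun x ↦ (hexp x).summable)
    ?_ (.of_forall fun x ↦ ?_) using 2 with n
  · rw [smul_smul, ← integral_smul]
    refine integral_congr_ae (.of_forall fun x ↦ ?_)
    simp only [← Complex.coe_smul, smul_smul]
    congr 1
    push_cast
    rw [mul_pow, neg_pow z]
    ring
  · exact (by fun_prop : Continuous fun x : ℝ ↦ (-z * x) ^ n / (n ! : ℂ)).aestronglyMeasurable.smul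
      hfm
  · have h := hC x
    rw [Real.norm_of_nonneg (exp_pos _).le] at h
    simp only [norm_smul, norm_div, norm_pow, norm_mul, norm_neg, Complex.norm_real,
      Complex.norm_natCast, Real.norm_eq_abs]
    gcongr
  · simp_rw [(hexp _).tsum_eq]
    exact (integrable_exp_neg_mul_abs (sub_pos.2 hz)).const_mul C
  · have h := NormedSpace.expSeries_div_hasSum_exp (-z * x)
    rw [← Complex.exp_eq_exp_ℂ] at h
    exact h.smul_const (f x)

lemma bilateralLaplace_add (f : ℝ → E) (z w : ℂ) :
    bilateralLaplace f (z + w) = bilateralLaplace (fun x ↦ Complex.exp (-z * x) • f x) w := by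
  simp only [bilateralLaplace, smul_smul, ← Complex.exp_add]
  ring_nf

lemma fourier_eq_bilateralLaplace (f : ℝ → E) (w : ℝ) :
    𝓕 f w = bilateralLaplace f (2 * π * w * Complex.I) := by
  rw [Real.fourier_real_eq_integral_exp_smul, bilateralLaplace]
  congr! 4
  push_cast
  ring

lemma analyticAt_bilateralLaplace (hfm : AEStronglyMeasurable f)
    (hf : f =O[⊤] fun x ↦ exp (-c * |x|)) {z : ℂ} (hz : |z.re| < c) :
    AnalyticAt ℂ (bilateralLaplace f) z := by
  set g : ℝ → E := fun x ↦ Complex.exp (-z * x) • f x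
  have hgm : AEStronglyMeasurable g :=
    (by fun_prop : Continuous fun x : ℝ ↦ Complex.exp (-z * x)).aestronglyMeasurable.smul hfm
  have hg : g =O[⊤] fun x ↦ exp (-(c - |z.re|) * |x|) := by
    have hz_exp : (fun x : ℝ ↦ Complex.exp (-z * x)) =O[⊤] fun x ↦ exp (|z.re| * |x|) := by
      refine isBigO_of_le _ fun x ↦ ?_
      rw [Complex.norm_exp, Real.norm_of_nonneg (exp_pos _).le, exp_le_exp, ← abs_mul]
      simpa using neg_le_abs (z.re * x)
    refine (hz_exp.smul hf).congr_right fun x ↦ ?_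
    rw [smul_eq_mul, ← Real.exp_add]
    ring_nf
  refine ⟨fun n ↦ .mkPiRing ℂ (Fin n) (((-1) ^ n / n ! : ℂ) • ∫ x : ℝ, x ^ n • g x),
    hasFPowerSeriesAt_iff.2 ?_⟩
  filter_upwards [Metric.ball_mem_nhds (0 : ℂ) (sub_pos.2 hz)] with w hw
  rw [bilateralLaplace_add]
  change HasSum _ (bilateralLaplace g w)
  simpa [FormalMultilinearSeries.coeff] using
    hasSum_bilateralLaplace hgm hg (mem_ball_zero_iff.1 hw)

variable [CompleteSpace E]

lemma eq_zero_of_bilateralLaplace_eventuallyEq_zero (hc : 0 < c) (hfm : AEStronglyMeasurable f)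
    (hf : f =O[⊤] fun x ↦ exp (-c * |x|)) (h : bilateralLaplace f =ᶠ[𝓝 0] 0)
    {y : ℝ} (hy : ContinuousAt f y) : f y = 0 := by
  have hstrip : IsPreconnected {z : ℂ | z.re ∈ Ioo (-c) c} :=
    ((convex_Ioo (-c) c).linear_preimage Complex.reLm).isPreconnected
  have hzero : EqOn (bilateralLaplace f) 0 {z : ℂ | z.re ∈ Ioo (-c) c} :=
    AnalyticOnNhd.eqOn_zero_of_preconnected_of_eventuallyEq_zero
      (fun z hz ↦ analyticAt_bilateralLaplace hfm hf (abs_lt.2 hz)) hstrip (by simp [hc]) h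
  have hfourier : 𝓕 f = 0 := by
    funext w
    rw [fourier_eq_bilateralLaplace]
    exact hzero (by simp [hc])
  have hint : Integrable f := hf.integrable hfm (integrable_exp_neg_mul_abs hc)
  rw [← hint.fourierInv_fourier_eq (by simp [hfourier]) hy, hfourier]
  simp [Real.fourierInv_eq']

lemma eq_zero_of_integral_pow_smul_eq_zero (hc : 0 < c) (hfm : AEStronglyMeasurable f)
    (hf : f =O[⊤] fun x ↦ exp (-c * |x|)) (hmom : ∀ n : ℕ, ∫ x : ℝ, x ^ n • f x = 0)
    {y : ℝ} (hy : ContinuousAt f y) : f y = 0 := by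
  refine eq_zero_of_bilateralLaplace_eventuallyEq_zero hc hfm hf ?_ hy
  filter_upwards [Metric.ball_mem_nhds (0 : ℂ) hc] with z hz
  have h := hasSum_bilateralLaplace hfm hf (mem_ball_zero_iff.1 hz)
  simp only [hmom, smul_zero] at h
  exact h.unique hasSum_zero

end BilateralLaplace

section StieltjesMoment

variable {E : Type*} [NormedAddCommGroup E]

lemma integral_eq_integral_Ioi_add_comp_neg [NormedSpace ℝ E] {f : ℝ → E} (hf : Integrable f) :
    ∫ x, f x = ∫ x in Ioi 0, (f x + f (-x)) := by
  have hneg : ∫ x in Iic 0, f x = ∫ x in Ioi 0, f (-x) := by simp [integral_comp_neg_Ioi]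
  rw [← intervalIntegral.integral_Iic_add_Ioi (b := 0) hf.integrableOn hf.integrableOn, hneg,
    add_comm, integral_add hf.integrableOn hf.comp_neg.integrableOn]

lemma integral_Ioi_id_smul_comp_sq [NormedSpace ℝ E] (g : ℝ → E) :
    ∫ v in Ioi (0 : ℝ), (2 * v) • g (v ^ 2) = ∫ u in Ioi (0 : ℝ), g u := by
  simpa [show (2 : ℝ) - 1 = 1 by norm_num] using
    integral_comp_rpow_Ioi_of_pos (g := g) (zero_lt_two' ℝ)

lemma integral_pow_smul_abs_smul_comp_sq [NormedSpace ℝ E] {H : ℝ → E} {n : ℕ}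
    (hint : Integrable fun v : ℝ ↦ v ^ n • |v| • H (v ^ 2))
    (hmom : ∀ m : ℕ, ∫ u in Ioi (0 : ℝ), u ^ m • H u = 0) :
    ∫ v : ℝ, v ^ n • |v| • H (v ^ 2) = 0 := by
  rw [integral_eq_integral_Ioi_add_comp_neg hint]
  rcases n.even_or_odd with ⟨m, rfl⟩ | hn
  · rw [← hmom m, ← integral_Ioi_id_smul_comp_sq fun u ↦ u ^ m • H u]
    refine setIntegral_congr_fun measurableSet_Ioi fun v hv ↦ ?_
    simp only [Even.neg_pow ⟨m, rfl⟩, abs_neg, neg_sq, abs_of_pos (mem_Ioi.1 hv), smul_smul,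
      ← add_smul]
    ring_nf
  · simp [hn.neg_pow]

/-- The rate `exp (-c * √u)` suffices because the substitution `u = v ^ 2` turns it into the
exponential decay of `v ↦ |v| • H (v ^ 2)`, an even function whose odd moments vanish for free. -/
lemma eqOn_zero_of_integral_Ioi_pow_smul_eq_zero [NormedSpace ℂ E] [CompleteSpace E]
    {H : ℝ → E} {c : ℝ} (hc : 0 < c) (hH : ContinuousOn H (Ioi 0))
    (hdecay : H =O[𝓟 (Ioi 0)] fun u ↦ exp (-c * √u))
    (hmom : ∀ m : ℕ, ∫ u in Ioi (0 : ℝ), u ^ m • H u = 0) : EqOn H 0 (Ioi 0) := by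
  set f : ℝ → E := fun v ↦ |v| • H (v ^ 2)
  have hsq : MapsTo (fun v : ℝ ↦ v ^ 2) {0}ᶜ (Ioi 0) := fun v hv ↦ sq_pos_of_ne_zero hv
  have hfc : ContinuousOn f {0}ᶜ :=
    continuous_abs.continuousOn.smul (hH.comp (continuous_pow 2).continuousOn hsq)
  have hfm : AEStronglyMeasurable f := by
    simpa using hfc.aestronglyMeasurable (μ := volume) (measurableSet_singleton 0).compl
  have hHsq : (fun v : ℝ ↦ H (v ^ 2)) =O[𝓟 {0}ᶜ] fun v ↦ exp (-c * |v|) := by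
    simpa [Function.comp_def, sqrt_sq_eq_abs] using
      hdecay.comp_tendsto (tendsto_principal_principal.2 hsq)
  have hf : f =O[⊤] fun v ↦ exp (-(c / 2) * |v|) := by
    obtain ⟨C, hC⟩ := isBigO_principal.1
      (isBigO_pow_smul_exp_neg (.of_forall abs_nonneg) (half_lt_self hc) hHsq 1)
    refine isBigO_top.2 ⟨|C|, fun v ↦ ?_⟩
    rcases eq_or_ne v 0 with rfl | hv
    · simp [f]
    · grw [← le_abs_self]
      simpa [f] using hC v hv
  have hint (n : ℕ) : Integrable fun v : ℝ ↦ v ^ n • f v := by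
    have habs : (fun v : ℝ ↦ v ^ n • f v) =O[⊤] fun v ↦ |v| ^ n • f v :=
      isBigO_of_le _ fun v ↦ by simp [norm_smul]
    have hpow : (fun v : ℝ ↦ v ^ n • f v) =O[⊤] fun v ↦ exp (-(c / 2 / 2) * |v|) :=
      habs.trans <|
        isBigO_pow_smul_exp_neg (.of_forall abs_nonneg) (half_lt_self (half_pos hc)) hf n
    exact hpow.integrable ((continuous_pow n).aestronglyMeasurable.smul hfm)
      (integrable_exp_neg_mul_abs (half_pos (half_pos hc)))
  intro u hu
  have hsqrt : 0 < √u := sqrt_pos.2 hu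
  have hzero : f (√u) = 0 :=
    eq_zero_of_integral_pow_smul_eq_zero (half_pos hc) hfm hf
      (fun n ↦ integral_pow_smul_abs_smul_comp_sq (hint n) hmom)
      (hfc.continuousAt (isOpen_compl_singleton.mem_nhds hsqrt.ne'))
  simpa [f, hsqrt.ne', sq_sqrt (mem_Ioi.1 hu).le] using hzero

end StieltjesMoment

section TwoSidedDecay

variable {E : Type*} [NormedAddCommGroup E] {g : ℝ → E} {d d' : ℝ}

lemma isBigO_rpow_smul_exp_neg_add_inv [NormedSpace ℝ E] (hd : d' < d)
    (hg : g =O[𝓟 (Ioi 0)] fun τ ↦ exp (-d * (τ + τ⁻¹))) (p : ℝ) :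
    (fun τ ↦ τ ^ p • g τ) =O[𝓟 (Ioi 0)] fun τ ↦ exp (-d' * (τ + τ⁻¹)) := by
  have hw : ∀ᶠ τ : ℝ in 𝓟 (Ioi 0), 0 ≤ τ + τ⁻¹ :=
    eventually_principal.2 fun τ hτ ↦ (add_pos hτ (inv_pos.2 hτ)).le
  have hpow : (fun τ : ℝ ↦ τ ^ p) =O[𝓟 (Ioi 0)] fun τ ↦ (τ + τ⁻¹) ^ |p| := by
    refine isBigO_principal.2 ⟨1, fun τ (hτ : 0 < τ) ↦ ?_⟩
    rw [one_mul, norm_of_nonneg (by positivity), norm_of_nonneg (by positivity)]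
    rcases abs_cases p with ⟨hp, hp0⟩ | ⟨hp, hp0⟩ <;> rw [hp]
    · gcongr
      exact le_add_of_nonneg_right (by positivity)
    · rw [← inv_inv τ, inv_rpow (by positivity), ← rpow_neg (by positivity), inv_inv τ]
      gcongr
      · exact neg_nonneg.2 hp0.le
      · exact le_add_of_nonneg_left hτ.le
  exact (hpow.smul (isBigO_refl g _)).trans (isBigO_rpow_smul_exp_neg hw (abs_nonneg p) hd hg)

lemma continuousOn_rpow_smul [NormedSpace ℝ E] (hg : ContinuousOn g (Ioi 0)) (p : ℝ) :
    ContinuousOn (fun τ : ℝ ↦ τ ^ p • g τ) (Ioi 0) :=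
  (continuousOn_id.rpow_const fun _ hτ ↦ .inl (ne_of_gt hτ)).smul hg

lemma isBigO_indicator_Ioi_exp_neg_abs (hd : 0 ≤ d)
    (hg : g =O[𝓟 (Ioi 0)] fun τ ↦ exp (-d * (τ + τ⁻¹))) :
    (Ioi 0).indicator g =O[⊤] fun x ↦ exp (-d * |x|) := by
  obtain ⟨C, hC0, hC⟩ := hg.exists_nonneg
  refine isBigO_top.2 ⟨C, fun x ↦ ?_⟩
  rw [norm_of_nonneg (exp_pos _).le]
  rcases le_or_gt x 0 with hx | hx
  · rw [indicator_of_notMem (notMem_Ioi.2 hx), norm_zero]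
    positivity
  · rw [indicator_of_mem (mem_Ioi.2 hx), abs_of_pos hx]
    refine (isBigOWith_principal.1 hC x hx).trans ?_
    rw [norm_of_nonneg (exp_pos _).le, neg_mul, neg_mul]
    gcongr
    exact le_add_of_nonneg_right (inv_pos.2 hx).le

lemma integrableOn_Ioi_of_isBigO_exp_neg_add_inv (hd : 0 < d)
    (hgm : AEStronglyMeasurable g (volume.restrict (Ioi 0)))
    (hg : g =O[𝓟 (Ioi 0)] fun τ ↦ exp (-d * (τ + τ⁻¹))) : IntegrableOn g (Ioi 0) := by
  rw [← integrable_indicator_iff measurableSet_Ioi]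
  exact (isBigO_indicator_Ioi_exp_neg_abs hd.le hg).integrable
    ((aestronglyMeasurable_indicator_iff measurableSet_Ioi).2 hgm) (integrable_exp_neg_mul_abs hd)

end TwoSidedDecay

section Laplace

variable {E : Type*} [NormedAddCommGroup E] [NormedSpace ℂ E] {g : ℝ → E} {d s : ℝ}

/-- The one-sided Laplace transform `z ↦ ∫_0^∞ e^{-zτ} g(τ) dτ`, with complex argument so that its
expansion at `0` can be compared with its values at small positive reals. -/
noncomputable def laplace (g : ℝ → E) (z : ℂ) : E :=
  ∫ τ in Ioi (0 : ℝ), Complex.exp (-z * τ) • g τ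

lemma laplace_eq_bilateralLaplace_indicator (g : ℝ → E) :
    laplace g = bilateralLaplace ((Ioi 0).indicator g) := by
  funext z
  simp only [laplace, bilateralLaplace, ← integral_indicator measurableSet_Ioi,
    indicator_smul_apply]

lemma analyticAt_laplace (hgm : AEStronglyMeasurable g (volume.restrict (Ioi 0)))
    (hg : g =O[𝓟 (Ioi 0)] fun τ ↦ exp (-d * (τ + τ⁻¹))) {z : ℂ} (hz : |z.re| < d) :
    AnalyticAt ℂ (laplace g) z := by
  rw [laplace_eq_bilateralLaplace_indicator]
  exact analyticAt_bilateralLaplace ((aestronglyMeasurable_indicator_iff measurableSet_Ioi).2 hgm)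
    (isBigO_indicator_Ioi_exp_neg_abs ((abs_nonneg _).trans hz.le) hg) hz

lemma eqOn_zero_of_laplace_eventuallyEq_zero [CompleteSpace E] (hd : 0 < d)
    (hgc : ContinuousOn g (Ioi 0)) (hg : g =O[𝓟 (Ioi 0)] fun τ ↦ exp (-d * (τ + τ⁻¹)))
    (h : laplace g =ᶠ[𝓝 0] 0) : EqOn g 0 (Ioi 0) := by
  intro τ hτ
  rw [laplace_eq_bilateralLaplace_indicator] at h
  rw [← indicator_of_mem hτ g]
  exact eq_zero_of_bilateralLaplace_eventuallyEq_zero hd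
    ((aestronglyMeasurable_indicator_iff measurableSet_Ioi).2
      (hgc.aestronglyMeasurable measurableSet_Ioi))
    (isBigO_indicator_Ioi_exp_neg_abs hd.le hg) h
    ((hgc.continuousAt (Ioi_mem_nhds hτ)).congr
      (eqOn_indicator.eventuallyEq_of_mem (Ioi_mem_nhds hτ)).symm)

lemma laplace_ofReal (g : ℝ → E) (u : ℝ) :
    laplace g u = ∫ τ in Ioi (0 : ℝ), exp (-u * τ) • g τ := by
  simp [laplace, ← Complex.coe_smul]

lemma continuousOn_laplace_ofReal (hg : IntegrableOn g (Ioi 0)) :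
    ContinuousOn (fun u : ℝ ↦ laplace g u) (Ici 0) := by
  simp only [laplace_ofReal]
  refine continuousOn_of_dominated (bound := fun τ ↦ ‖g τ‖) (fun u _ ↦ ?_) (fun u hu ↦ ?_)
    hg.norm (.of_forall fun τ ↦ by fun_prop)
  · exact (by fun_prop : Continuous fun τ : ℝ ↦ exp (-u * τ)).aestronglyMeasurable.smul
      hg.aestronglyMeasurable
  · filter_upwards [ae_restrict_mem measurableSet_Ioi] with τ hτ
    rw [norm_smul, norm_of_nonneg (exp_pos _).le]
    refine mul_le_of_le_one_left (norm_nonneg _) (exp_le_one_iff.2 ?_)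
    rw [neg_mul, neg_nonpos]
    exact mul_nonneg hu (mem_Ioi.1 hτ).le

lemma two_mul_sqrt_mul_sqrt_le {τ u : ℝ} (hd : 0 ≤ d) (hu : 0 ≤ u) (hτ : 0 < τ) :
    2 * √d * √u ≤ u * τ + d * τ⁻¹ := by
  have h := two_mul_le_add_sq √(u * τ) √(d * τ⁻¹)
  rw [sq_sqrt (by positivity), sq_sqrt (by positivity), mul_assoc, ← sqrt_mul (by positivity)] at h
  rw [mul_assoc, ← sqrt_mul hd]
  rwa [show u * τ * (d * τ⁻¹) = d * u by field_simp] at h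

lemma isBigO_laplace_ofReal (hd : 0 < d)
    (hg : g =O[𝓟 (Ioi 0)] fun τ ↦ exp (-d * (τ + τ⁻¹))) :
    (fun u : ℝ ↦ laplace g u) =O[𝓟 (Ioi 0)] fun u ↦ exp (-(2 * √d) * √u) := by
  obtain ⟨C, hC0, hC⟩ := hg.exists_nonneg
  rw [isBigOWith_principal] at hC
  refine isBigO_principal.2 ⟨∫ τ in Ioi 0, C * exp (-d * τ), fun u (hu : 0 < u) ↦ ?_⟩
  rw [laplace_ofReal, norm_of_nonneg (exp_pos _).le, ← integral_mul_const]
  refine norm_integral_le_of_norm_le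
    (((integrableOn_exp_mul_Ioi (neg_lt_zero.2 hd) 0).const_mul C).mul_const _) ?_
  filter_upwards [ae_restrict_mem measurableSet_Ioi] with τ (hτ : 0 < τ)
  have hCτ := hC τ hτ
  rw [norm_of_nonneg (exp_pos _).le] at hCτ
  rw [norm_smul, norm_of_nonneg (exp_pos _).le]
  calc exp (-u * τ) * ‖g τ‖ ≤ exp (-u * τ) * (C * exp (-d * (τ + τ⁻¹))) := by gcongr
    _ = C * exp (-d * τ) * exp (-(u * τ + d * τ⁻¹)) := by
      rw [mul_left_comm, mul_assoc, ← exp_add, ← exp_add]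
      ring_nf
    _ ≤ C * exp (-d * τ) * exp (-(2 * √d) * √u) := by
      rw [neg_mul (2 * √d)]
      gcongr
      exact two_mul_sqrt_mul_sqrt_le hd.le hu.le hτ

lemma isBigO_rpow_smul_laplace_ofReal (hd : 0 < d)
    (hg : g =O[𝓟 (Ioi 0)] fun τ ↦ exp (-d * (τ + τ⁻¹))) {p : ℝ} (hp : 0 ≤ p) :
    (fun u : ℝ ↦ u ^ p • laplace g u) =O[𝓟 (Ioi 0)] fun u ↦ exp (-√d * √u) := by
  have h : (fun u : ℝ ↦ √u ^ (2 * p) • laplace g u) =O[𝓟 (Ioi 0)] fun u ↦ exp (-√d * √u) :=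
    isBigO_rpow_smul_exp_neg (.of_forall sqrt_nonneg) (by positivity)
      (by linarith [sqrt_pos.2 hd]) (isBigO_laplace_ofReal hd hg)
  refine h.congr' (eventually_principal.2 fun u hu ↦ ?_) .rfl
  simp only [rpow_mul (sqrt_nonneg u), rpow_two, sq_sqrt (mem_Ioi.1 hu).le]

lemma integral_Ioi_rpow_mul_exp_neg_mul {τ : ℝ} (hs : 0 < s) (hτ : 0 < τ) :
    ∫ u in Ioi (0 : ℝ), u ^ (s - 1) * exp (-u * τ) = Gamma s * τ ^ (-s) := by
  rw [rpow_neg hτ.le, ← inv_rpow hτ.le, ← one_div, mul_comm (Gamma s),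
    ← integral_rpow_mul_exp_neg_mul_Ioi hs hτ]
  simp only [mul_comm τ, neg_mul]

lemma integrable_prod_rpow_mul_exp_neg_mul_smul (hs : 0 < s)
    (hg : IntegrableOn (fun τ ↦ τ ^ (-s) • g τ) (Ioi 0)) :
    Integrable (fun p : ℝ × ℝ ↦ (p.1 ^ (s - 1) * exp (-p.1 * p.2)) • g p.2)
      ((volume.restrict (Ioi 0)).prod (volume.restrict (Ioi 0))) := by
  have hgm : AEStronglyMeasurable g (volume.restrict (Ioi 0)) := by
    refine ((by fun_prop : Measurable fun τ : ℝ ↦ τ ^ s).aestronglyMeasurable.smul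
      hg.aestronglyMeasurable).congr ?_
    filter_upwards [ae_restrict_mem measurableSet_Ioi] with τ (hτ : 0 < τ)
    simp [smul_smul, ← rpow_add hτ]
  refine (integrable_prod_iff' ((by fun_prop : Measurable fun p : ℝ × ℝ ↦
    p.1 ^ (s - 1) * exp (-p.1 * p.2)).aestronglyMeasurable.smul hgm.comp_snd)).2 ⟨?_, ?_⟩
  · filter_upwards [ae_restrict_mem measurableSet_Ioi] with τ (hτ : 0 < τ)
    have hGamma : IntegrableOn (fun u : ℝ ↦ u ^ (s - 1) * exp (-u * τ)) (Ioi 0) := by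
      simpa [mul_comm τ] using
        integrableOn_rpow_mul_exp_neg_mul_rpow (p := 1) (s := s - 1) (by linarith) one_pos hτ
    exact hGamma.smul_const (g τ)
  · refine (hg.norm.const_mul (Gamma s)).congr ?_
    filter_upwards [ae_restrict_mem measurableSet_Ioi] with τ (hτ : 0 < τ)
    calc Gamma s * ‖τ ^ (-s) • g τ‖
        = ∫ u in Ioi (0 : ℝ), u ^ (s - 1) * exp (-u * τ) * ‖g τ‖ := by
          rw [integral_mul_const, integral_Ioi_rpow_mul_exp_neg_mul hs hτ, norm_smul,
            norm_of_nonneg (by positivity), mul_assoc]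
      _ = ∫ u in Ioi (0 : ℝ), ‖(u ^ (s - 1) * exp (-u * τ)) • g τ‖ := by
          refine setIntegral_congr_fun measurableSet_Ioi fun u (hu : 0 < u) ↦ ?_
          rw [norm_smul, norm_of_nonneg (by positivity)]

lemma integral_rpow_smul_laplace [CompleteSpace E] (hs : 0 < s)
    (hg : IntegrableOn (fun τ ↦ τ ^ (-s) • g τ) (Ioi 0)) :
    ∫ u in Ioi (0 : ℝ), u ^ (s - 1) • laplace g u =
      Gamma s • ∫ τ in Ioi (0 : ℝ), τ ^ (-s) • g τ :=
  calc ∫ u in Ioi (0 : ℝ), u ^ (s - 1) • laplace g u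
      = ∫ u in Ioi (0 : ℝ), ∫ τ in Ioi (0 : ℝ), (u ^ (s - 1) * exp (-u * τ)) • g τ := by
        simp only [laplace_ofReal, mul_smul, integral_smul]
    _ = ∫ τ in Ioi (0 : ℝ), ∫ u in Ioi (0 : ℝ), (u ^ (s - 1) * exp (-u * τ)) • g τ :=
        integral_integral_swap (integrable_prod_rpow_mul_exp_neg_mul_smul hs hg)
    _ = ∫ τ in Ioi (0 : ℝ), Gamma s • τ ^ (-s) • g τ := by
        refine setIntegral_congr_fun measurableSet_Ioi fun τ hτ ↦ ?_
        rw [integral_smul_const, integral_Ioi_rpow_mul_exp_neg_mul hs hτ, mul_smul]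
    _ = Gamma s • ∫ τ in Ioi (0 : ℝ), τ ^ (-s) • g τ := integral_smul _ _

lemma integrableOn_rpow_smul_laplace (hs : 0 < s)
    (hg : IntegrableOn (fun τ ↦ τ ^ (-s) • g τ) (Ioi 0)) :
    IntegrableOn (fun u : ℝ ↦ u ^ (s - 1) • laplace g u) (Ioi 0) := by
  simpa only [laplace_ofReal, mul_smul, integral_smul, IntegrableOn] using
    (integrable_prod_rpow_mul_exp_neg_mul_smul hs hg).integral_prod_left

end Laplace

section RealPowers

variable {ι E : Type*} [NormedAddCommGroup E]

lemma exists_eq_zero_of_sum_rpow_smul_eventually_eq_zero [NormedSpace ℝ E] {s : Finset ι}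
    (hs : s.Nonempty) {β : ι → ℝ} (hβ : InjOn β s) {L : ι → ℝ → E} {l : ι → E}
    (hL : ∀ k ∈ s, Tendsto (L k) (𝓝[>] 0) (𝓝 (l k)))
    (hsum : ∀ᶠ u in 𝓝[>] 0, ∑ k ∈ s, u ^ β k • L k u = 0) : ∃ k ∈ s, l k = 0 := by
  classical
  obtain ⟨k₀, hk₀, hmin⟩ := s.exists_min_image β hs
  refine ⟨k₀, hk₀, ?_⟩
  have hterm : ∀ k ∈ s, Tendsto (fun u ↦ u ^ (β k - β k₀) • L k u) (𝓝[>] 0)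
      (𝓝 (if k = k₀ then l k else 0)) := by
    intro k hk
    split_ifs with hkk₀
    · simpa [hkk₀] using hL k₀ hk₀
    · have hpos : 0 < β k - β k₀ :=
        sub_pos.2 ((hmin k hk).lt_of_ne fun h ↦ hkk₀ (hβ hk hk₀ h.symm))
      have hrpow : Tendsto (fun u : ℝ ↦ u ^ (β k - β k₀)) (𝓝[>] 0) (𝓝 0) := by
        simpa [zero_rpow hpos.ne'] using
          (continuousAt_rpow_const 0 _ (.inr hpos.le)).tendsto.mono_left nhdsWithin_le_nhds
      simpa using hrpow.smul (hL k hk)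
  have hlim := tendsto_finsetSum s hterm
  rw [Finset.sum_ite_eq' s k₀, if_pos hk₀] at hlim
  refine tendsto_nhds_unique_of_eventuallyEq hlim tendsto_const_nhds ?_
  filter_upwards [hsum, self_mem_nhdsWithin] with u hu (hu0 : 0 < u)
  simp only [sub_eq_neg_add, rpow_add hu0, mul_smul, ← Finset.smul_sum, hu, smul_zero]

lemma eventuallyEq_zero_of_sum_rpow_smul_eventually_eq_zero [Fintype ι] [NormedSpace ℂ E]
    {α : ι → ℝ} (hα : ∀ j k, j ≠ k → ∀ m : ℤ, α k - α j ≠ m) {G : ι → ℂ → E}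
    (hG : ∀ k, AnalyticAt ℂ (G k) 0)
    (hsum : ∀ᶠ u : ℝ in 𝓝[>] 0, ∑ k, u ^ α k • G k u = 0) (k : ι) : G k =ᶠ[𝓝 0] 0 := by
  classical
  by_contra hk
  set s : Finset ι := {j | ¬ G j =ᶠ[𝓝 0] 0}
  have hfactor : ∀ j ∈ s, ∃ (n : ℕ) (F : ℂ → E),
      AnalyticAt ℂ F 0 ∧ F 0 ≠ 0 ∧ ∀ᶠ z in 𝓝 0, G j z = z ^ n • F z := fun j hj ↦ by
    simpa using (hG j).exists_eventuallyEq_pow_smul_nonzero_iff.2 (Finset.mem_filter.1 hj).2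
  choose! n F hF hF0 hGF using hfactor
  have hofReal : Tendsto ((↑) : ℝ → ℂ) (𝓝[>] 0) (𝓝 0) := by
    simpa using Complex.continuous_ofReal.continuousAt.tendsto.mono_left
      (nhdsWithin_le_nhds (a := (0 : ℝ)) (s := Ioi 0))
  have hinj : InjOn (fun j ↦ α j + n j) s := by
    intro i _ j _ hij
    by_contra hne
    refine hα i j hne ((n i : ℤ) - n j) ?_
    push_cast
    linarith
  have hzero : ∀ᶠ u : ℝ in 𝓝[>] 0, ∀ j ∉ s, G j u = 0 :=
    eventually_all.2 fun j ↦ eventually_imp_distrib_left.2 fun hj ↦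
      hofReal.eventually (show G j =ᶠ[𝓝 0] 0 by simpa [s] using hj)
  have hpow : ∀ᶠ u : ℝ in 𝓝[>] 0, ∀ j ∈ s, G j u = (u : ℂ) ^ n j • F j u :=
    (Finset.eventually_all s).2 fun j hj ↦ hofReal.eventually (hGF j hj)
  have hsumF : ∀ᶠ u : ℝ in 𝓝[>] 0, ∑ j ∈ s, u ^ (α j + n j) • F j u = 0 := by
    filter_upwards [hsum, hzero, hpow, self_mem_nhdsWithin] with u hu hu_zero hu_pow (hu0 : 0 < u)
    rw [← hu, ← Finset.sum_subset s.subset_univ fun j _ hj ↦ by rw [hu_zero j hj, smul_zero]]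
    refine Finset.sum_congr rfl fun j hj ↦ ?_
    rw [hu_pow j hj, rpow_add hu0, rpow_natCast, mul_smul, ← Complex.ofReal_pow, Complex.coe_smul]
  obtain ⟨j, hj, hFj⟩ := exists_eq_zero_of_sum_rpow_smul_eventually_eq_zero
    ⟨k, by simpa [s] using hk⟩ hinj
    (fun j hj ↦ (hF j hj).continuousAt.tendsto.comp hofReal) hsumF
  exact hF0 j hj hFj

end RealPowers

section Decoupling

variable {ι E : Type*} [Fintype ι] [NormedAddCommGroup E] [NormedSpace ℂ E] [CompleteSpace E]
  {α : ι → ℝ} {d : ℝ}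

lemma sum_rpow_smul_laplace_eq_zero_of_nonneg (hd : 0 < d) (hα : ∀ k, 0 ≤ α k) {g : ι → ℝ → E}
    (hgc : ∀ k, ContinuousOn (g k) (Ioi 0))
    (hg : ∀ k, g k =O[𝓟 (Ioi 0)] fun τ ↦ exp (-d * (τ + τ⁻¹)))
    (hvanish : ∀ m : ℕ, ∑ k, Gamma (m + 1 + α k) •
      ∫ τ in Ioi (0 : ℝ), τ ^ (-(m + 1 + α k)) • g k τ = 0)
    {u : ℝ} (hu : 0 < u) : ∑ k, u ^ α k • laplace (g k) u = 0 := by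
  have hg_int (k : ι) : IntegrableOn (g k) (Ioi 0) :=
    integrableOn_Ioi_of_isBigO_exp_neg_add_inv hd
      ((hgc k).aestronglyMeasurable measurableSet_Ioi) (hg k)
  have hrpow_int (k : ι) (p : ℝ) : IntegrableOn (fun τ ↦ τ ^ p • g k τ) (Ioi 0) :=
    integrableOn_Ioi_of_isBigO_exp_neg_add_inv (half_pos hd)
      ((continuousOn_rpow_smul (hgc k) p).aestronglyMeasurable measurableSet_Ioi)
      (isBigO_rpow_smul_exp_neg_add_inv (half_lt_self hd) (hg k) p)
  have hs (k : ι) (m : ℕ) : 0 < m + 1 + α k := by have := hα k; positivity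
  refine eqOn_zero_of_integral_Ioi_pow_smul_eq_zero (H := fun u ↦ ∑ k, u ^ α k • laplace (g k) u)
    (sqrt_pos.2 hd) ?_ ?_ (fun m ↦ ?_) hu
  · exact continuousOn_finsetSum _ fun k _ ↦ continuousOn_rpow_smul
      ((continuousOn_laplace_ofReal (hg_int k)).mono Ioi_subset_Ici_self) (α k)
  · exact .fun_sum fun k _ ↦ isBigO_rpow_smul_laplace_ofReal hd (hg k) (hα k)
  · calc ∫ u in Ioi (0 : ℝ), u ^ m • ∑ k, u ^ α k • laplace (g k) u
        = ∫ u in Ioi (0 : ℝ), ∑ k, u ^ (m + 1 + α k - 1) • laplace (g k) u := by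
          refine setIntegral_congr_fun measurableSet_Ioi fun u (hu : 0 < u) ↦ ?_
          simp only [Finset.smul_sum, smul_smul, ← rpow_natCast u m, ← rpow_add hu]
          ring_nf
      _ = ∑ k, ∫ u in Ioi (0 : ℝ), u ^ (m + 1 + α k - 1) • laplace (g k) u :=
          integral_finsetSum _ fun k _ ↦ integrableOn_rpow_smul_laplace (hs k m) (hrpow_int k _)
      _ = 0 := by
          simp only [integral_rpow_smul_laplace (hs _ m) (hrpow_int _ _), hvanish m]

lemma sum_rpow_smul_laplace_eq_zero (hd : 0 < d) {g : ι → ℝ → E}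
    (hgc : ∀ k, ContinuousOn (g k) (Ioi 0))
    (hg : ∀ k, g k =O[𝓟 (Ioi 0)] fun τ ↦ exp (-d * (τ + τ⁻¹)))
    (hvanish : ∀ᶠ m : ℕ in atTop, ∑ k, Gamma (m + 1 + α k) •
      ∫ τ in Ioi (0 : ℝ), τ ^ (-(m + 1 + α k)) • g k τ = 0)
    {u : ℝ} (hu : 0 < u) : ∑ k, u ^ α k • laplace (g k) u = 0 := by
  have hpos : ∀ᶠ ℓ : ℕ in atTop, ∀ k, 0 ≤ ℓ + α k :=
    eventually_all.2 fun k ↦ (tendsto_natCast_atTop_atTop.eventually_ge_atTop (-α k)).mono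
      fun ℓ hℓ ↦ by linarith
  obtain ⟨ℓ, hℓ, hℓα⟩ := ((eventually_forall_ge_atTop.2 hvanish).and hpos).exists
  have hsum : ∑ k, u ^ (ℓ + α k) • laplace (g k) u = 0 := by
    refine sum_rpow_smul_laplace_eq_zero_of_nonneg hd hℓα hgc hg (fun m ↦ ?_) hu
    rw [← hℓ (m + ℓ) (Nat.le_add_left ℓ m)]
    push_cast
    ring_nf
  simp only [rpow_add hu, mul_smul, ← Finset.smul_sum] at hsum
  exact (smul_eq_zero.1 hsum).resolve_left (rpow_pos_of_pos hu _).ne'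

theorem entanglement_decoupling_lemma_general
    (hα : ∀ j k, j ≠ k → ∀ m : ℤ, α k - α j ≠ m) (hd : 0 < d) {f : ι → ℝ → E}
    (hfc : ∀ k, ContinuousOn (f k) (Ioi 0))
    (hf : ∀ k, f k =O[𝓟 (Ioi 0)] fun τ ↦ exp (-d * (τ + τ⁻¹)))
    (hvanish : ∀ᶠ m : ℕ in atTop, ∑ k, Gamma (m + 1 + α k) •
      ∫ τ in Ioi (0 : ℝ), τ ^ (-(m : ℝ)) • f k τ = 0) (k : ι) : EqOn (f k) 0 (Ioi 0) := by
  set g : ι → ℝ → E := fun k τ ↦ τ ^ (1 + α k) • f k τ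
  have hgc (k : ι) : ContinuousOn (g k) (Ioi 0) := continuousOn_rpow_smul (hfc k) _
  have hg (k : ι) : g k =O[𝓟 (Ioi 0)] fun τ ↦ exp (-(d / 2) * (τ + τ⁻¹)) :=
    isBigO_rpow_smul_exp_neg_add_inv (half_lt_self hd) (hf k) _
  have hsum {u : ℝ} (hu : 0 < u) : ∑ k, u ^ α k • laplace (g k) u = 0 := by
    refine sum_rpow_smul_laplace_eq_zero (half_pos hd) hgc hg (hvanish.mono fun m hm ↦ ?_) hu
    rw [← hm]
    refine Finset.sum_congr rfl fun k _ ↦ congrArg _ ?_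
    refine setIntegral_congr_fun measurableSet_Ioi fun τ (hτ : 0 < τ) ↦ ?_
    simp only [g, smul_smul, ← rpow_add hτ]
    ring_nf
  have hlaplace : laplace (g k) =ᶠ[𝓝 0] 0 :=
    eventuallyEq_zero_of_sum_rpow_smul_eventually_eq_zero hα
      (fun k ↦ analyticAt_laplace ((hgc k).aestronglyMeasurable measurableSet_Ioi) (hg k)
        (by simpa using hd))
      (eventually_mem_nhdsWithin.mono fun u hu ↦ hsum hu) k
  intro τ hτ
  have hgτ : g k τ = 0 :=
    eqOn_zero_of_laplace_eventuallyEq_zero (half_pos hd) (hgc k) (hg k) hlaplace hτ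
  exact (smul_eq_zero.1 hgτ).resolve_left (rpow_pos_of_pos hτ _).ne'

end Decoupling

lemma isBigO_exp_neg_add_inv_of_norm_le {E : Type*} [NormedAddCommGroup E] {f : ℝ → E}
    {a c δ : ℝ} (ha : 0 < a) (hδ : 0 ≤ δ) (hinfty : ∀ τ, a < τ → ‖f τ‖ ≤ c * exp (-δ * τ))
    (hzero : ∀ τ, 0 < τ → τ ≤ a → ‖f τ‖ ≤ c * exp (-δ / τ)) :
    f =O[𝓟 (Ioi 0)] fun τ ↦ exp (-δ * (τ + τ⁻¹)) := by
  have hc : 0 ≤ c :=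
    nonneg_of_mul_nonneg_left ((norm_nonneg _).trans (hinfty (a + 1) (lt_add_one a))) (exp_pos _)
  refine isBigO_principal.2 ⟨c * exp (δ * (a + a⁻¹)), fun τ (hτ : 0 < τ) ↦ ?_⟩
  rw [norm_of_nonneg (exp_pos _).le, mul_assoc, ← exp_add]
  rcases le_or_gt τ a with hτa | hτa
  · refine (hzero τ hτ hτa).trans ?_
    gcongr
    have h : δ * τ ≤ δ * a := by gcongr
    have ha' : 0 ≤ δ * a⁻¹ := by positivity
    rw [div_eq_mul_inv]
    linarith
  · refine (hinfty τ hτa).trans ?_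
    gcongr
    have h : δ * τ⁻¹ ≤ δ * a⁻¹ := by gcongr
    have ha' : 0 ≤ δ * a := by positivity
    linarith

theorem entanglement_decoupling_lemma
    (N : ℕ) (hN : 1 ≤ N) (α : Fin N → ℝ)
    (hpos : ∀ k, 0 < α k)
    (hmono : StrictMono α)
    (hnotnat : ∀ k, ∀ m : ℕ, α k ≠ m)
    (hdiff : ∀ j k : Fin N, j ≠ k → ∀ m : ℤ, α k - α j ≠ m)
    (a : ℝ) (ha : 0 < a) (ℓ : ℕ)
    (f : Fin N → ℝ → ℂ)
    (hsmooth : ∀ k, ContDiffOn ℝ (⊤ : ℕ∞) (f k) (Ioi 0))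
    (c δ : ℝ) (hc : 0 < c) (hδ : 0 < δ)
    (hdecay_infty : ∀ k, ∀ τ : ℝ, a < τ → ‖f k τ‖ ≤ c * Real.exp (-δ * τ))
    (hdecay_zero : ∀ k, ∀ τ : ℝ, 0 < τ → τ ≤ a → ‖f k τ‖ ≤ c * Real.exp (-δ / τ))
    (hvanish : ∀ m : ℕ, ℓ ≤ m →
      ∑ k, (Real.Gamma ((m : ℝ) + 1 + α k) : ℂ) *
        ∫ τ in Ioi (0 : ℝ), f k τ * ((τ ^ (-(m : ℝ)) : ℝ) : ℂ) = 0) :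
    ∀ k, ∀ τ : ℝ, 0 < τ → f k τ = 0 := by
  refine entanglement_decoupling_lemma_general hdiff hδ (fun k ↦ (hsmooth k).continuousOn)
    (fun k ↦ isBigO_exp_neg_add_inv_of_norm_le ha hδ.le (hdecay_infty k) (hdecay_zero k)) ?_
  filter_upwards [eventually_ge_atTop ℓ] with m hm
  simpa only [Complex.real_smul, mul_comm (f _ _)] using hvanish m hm
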